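/- Splitting Lemma: Let X and Y be finite probability spaces and A ⊆ X × Y with Pr[(x,y) ∈ A] ≥ ε (under the product distribution). For any α < ε define B = {(x,y) ∈ X×Y : Pr_{y'∈Y}[(x,y') ∈ A] ≥ ε - α}. Then (i) Pr[B] ≥ α; (ii) for all (x,y) ∈ B, Pr_{y'∈Y}[(x,y') ∈ A] ≥ ε - α; and (iii) Pr[B | A] ≥ α/ε. -/

import Mathlib

open MeasureTheory ProbabilityTheory

/-!
Call a row `{x} × Y` heavy if its section of `A` has measure at least `ε - α`. By Fubini the light
rows contribute at most `ε - α` to the measure of `A`, so at least `α` of `A` lies in heavy rows.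
Conditionally on `A`, the light rows have total probability at most `(ε - α) / ε = 1 - α / ε`.
-/

section HeavyRows

variable {X Y : Type*} [MeasurableSpace Y]

/-- The union of the heavy rows of `A`: the set `B` of the splitting lemma, with threshold `c` in
place of `ε - α`. It is a subset of `X × Y` rather than of `X`, so that it can be intersected
with `A`. -/
def heavyRows (ν : Measure Y) (A : Set (X × Y)) (c : ENNReal) : Set (X × Y) :=
  {p | c ≤ ν (Prod.mk p.1 ⁻¹' A)}

theorem measure_prodMk_preimage_sdiff_heavyRows_le (ν : Measure Y) (A : Set (X × Y)) (c : ENNReal)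
    (x : X) : ν (Prod.mk x ⁻¹' (A \ heavyRows ν A c)) ≤ c := by
  by_cases heavy : c ≤ ν (Prod.mk x ⁻¹' A)
  · have section_empty : Prod.mk x ⁻¹' (A \ heavyRows ν A c) = ∅ :=
      Set.eq_empty_of_forall_notMem fun _ hy => hy.2 heavy
    simp [section_empty]
  · calc
      ν (Prod.mk x ⁻¹' (A \ heavyRows ν A c)) ≤ ν (Prod.mk x ⁻¹' A) :=
        measure_mono (Set.preimage_mono Set.sdiff_subset)
      _ ≤ c := (not_le.mp heavy).le

variable [MeasurableSpace X]

theorem measurableSet_heavyRows {ν : Measure Y} [SFinite ν] {A : Set (X × Y)}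
    (hA : MeasurableSet A) (c : ENNReal) : MeasurableSet (heavyRows ν A c) :=
  measurableSet_le measurable_const ((measurable_measure_prodMk_left hA).comp measurable_fst)

theorem measure_prod_sdiff_heavyRows_le (μ : Measure X) (ν : Measure Y) [SFinite ν]
    {A : Set (X × Y)} (hA : MeasurableSet A) (c : ENNReal) :
    μ.prod ν (A \ heavyRows ν A c) ≤ c * μ Set.univ :=
  calc
    μ.prod ν (A \ heavyRows ν A c) = ∫⁻ x, ν (Prod.mk x ⁻¹' (A \ heavyRows ν A c)) ∂μ :=
      Measure.prod_apply (hA.diff (measurableSet_heavyRows hA c))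
    _ ≤ ∫⁻ _, c ∂μ := lintegral_mono (measure_prodMk_preimage_sdiff_heavyRows_le ν A c)
    _ = c * μ Set.univ := lintegral_const c

end HeavyRows

theorem one_sub_div_le_cond {Ω : Type*} [MeasurableSpace Ω] {μ : Measure Ω} [IsFiniteMeasure μ]
    {A B : Set Ω} {ε δ : ENNReal} (hA : MeasurableSet A) (hε₀ : ε ≠ 0) (hε : ε ≤ μ A)
    (hδ : μ (A \ B) ≤ δ) : 1 - δ / ε ≤ μ[|A] B := by
  have : IsProbabilityMeasure μ[|A] :=
    cond_isProbabilityMeasure ((pos_iff_ne_zero.mpr hε₀).trans_le hε).ne'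
  have cond_compl_le : μ[|A] Bᶜ ≤ δ / ε := by
    rw [cond_apply hA, ← Set.sdiff_eq, mul_comm, ← div_eq_mul_inv]
    exact ENNReal.div_le_div hδ hε
  calc
    1 - δ / ε ≤ 1 - μ[|A] Bᶜ := tsub_le_tsub_left cond_compl_le 1
    _ ≤ μ[|A] B := tsub_le_iff_right.mpr <| by
      simpa using measure_univ_le_add_compl (μ := μ[|A]) B

theorem one_sub_tsub_div_self {ε α : ENNReal} (hε₀ : ε ≠ 0) (hε : ε ≠ ⊤) (hα : α ≤ ε) :
    1 - (ε - α) / ε = α / ε := by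
  rw [ENNReal.sub_div fun _ _ => hε₀, ENNReal.div_self hε₀ hε]
  exact ENNReal.sub_sub_cancel ENNReal.one_ne_top (ENNReal.div_le_of_le_mul (by simpa using hα))

theorem splitting_lemma_general {X Y : Type*} [MeasurableSpace X] [MeasurableSpace Y]
    (μX : Measure X) (μY : Measure Y) [IsProbabilityMeasure μX] [IsFiniteMeasure μY]
    {A : Set (X × Y)} (hA : MeasurableSet A) {ε α : ENNReal} (hε : ε ≤ μX.prod μY A)
    (hα : α < ε) :
    α ≤ μX.prod μY (heavyRows μY A (ε - α)) ∧
    (∀ p ∈ heavyRows μY A (ε - α), ε - α ≤ μY (Prod.mk p.1 ⁻¹' A)) ∧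
    α / ε ≤ (μX.prod μY)[|A] (heavyRows μY A (ε - α)) := by
  set B := heavyRows μY A (ε - α)
  have hε₀ : ε ≠ 0 := hα.ne_bot
  have hε_top : ε ≠ ⊤ := ne_top_of_le_ne_top (measure_ne_top _ A) hε
  have light_le : μX.prod μY (A \ B) ≤ ε - α := by
    simpa using measure_prod_sdiff_heavyRows_le μX μY hA (ε - α)
  refine ⟨?_, fun _ hp => hp, ?_⟩
  · calc
      α = ε - (ε - α) := (ENNReal.sub_sub_cancel hε_top hα.le).symm
      _ ≤ μX.prod μY A - μX.prod μY (A \ B) := tsub_le_tsub hε light_le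
      _ ≤ μX.prod μY (A ∩ B) := tsub_le_iff_right.mpr (measure_le_inter_add_sdiff _ A B)
      _ ≤ μX.prod μY B := measure_mono Set.inter_subset_right
  · rw [← one_sub_tsub_div_self hε₀ hε_top hα.le]
    exact one_sub_div_le_cond hA hε₀ hε light_le

/-- Splitting Lemma (Pointcheval–Stern): if Pr[(x,y) ∈ A] ≥ ε under a product
distribution and α < ε, then setting B = {(x,y) : Pr_{y'}[(x,y') ∈ A] ≥ ε - α},
we have (i) Pr[B] ≥ α, (ii) the defining property of B, and (iii) Pr[B | A] ≥ α/ε. -/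
theorem splitting_lemma (X Y : Type*) [Fintype X] [Fintype Y]
    [MeasurableSpace X] [MeasurableSpace Y]
    (μX : Measure X) (μY : Measure Y) [IsProbabilityMeasure μX] [IsProbabilityMeasure μY]
    (A : Set (X × Y)) (hA : MeasurableSet A) (ε α : ENNReal) (hε : μX.prod μY A ≥ ε)
    (hα : α < ε) :
    (μX.prod μY {p : X × Y | μY {y' : Y | (p.1, y') ∈ A} ≥ ε - α} ≥ α) ∧
    (∀ p ∈ {p : X × Y | μY {y' : Y | (p.1, y') ∈ A} ≥ ε - α},
        μY {y' : Y | (p.1, y') ∈ A} ≥ ε - α) ∧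
    ((μX.prod μY)[|A] {p : X × Y | μY {y' : Y | (p.1, y') ∈ A} ≥ ε - α} ≥ α / ε) :=
  splitting_lemma_general μX μY hA hε hα
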